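/- Let m ≥ 1, 0 < α < n, and let d ≥ 0 be an integer. Let A ⊆ {1,…,m} be nonempty. Then there is a constant C = C(n, m, α, d) such that the following holds. Let Q₁,…,Q_m be cubes with centers z_j and side lengths l_j, and let a₁,…,a_m be measurable functions with |a_j| ≤ χ_{Q_j} and ∫_{ℝⁿ} a_j(y) y^β dy = 0 for all multi-indices |β| ≤ d. Then for every x ∈ ℝⁿ with x ∉ Q_j* for all j ∈ A and x ∈ Q_j* for all j ∉ A, |I_α(a₁,…,a_m)(x)| ≤ C ∏_{j∈A} l_j^{n + (d+1)/|A|} (|x−z_j| + l_j)^{−n − (d+1)/|A| + α/|A|} · ∏_{j∉A} l_j^{n + (d+1)/|A|} (|x−z_j| + l_j)^{−n − (d+1)/|A|}. -/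

import Mathlib

/-!
The cancellation of a single atom suffices. Let `j0 ∈ A` be the index with the smallest side
length, `D = |x - z_{j0}|² + ∑_{i ≠ j0} |x - y_i|²` and `T = √D`. As a function of `y_{j0}` the
kernel is
`(D - 2⟨x - z_{j0}, y_{j0} - z_{j0}⟩ + |y_{j0} - z_{j0}|²) ^ s`, with `s = (α - mn) / 2`,
that is, `D ^ s (1 + u + v) ^ s` with `u` linear and `v` quadratic in `y_{j0} - z_{j0}`. Expanding
in the binomial series and keeping only the monomials `u ^ p v ^ q` with `p + 2q ≤ d` gives a
polynomial of degree at most `d` in `y_{j0}` up to an error `O(l_{j0}^{d+1} T^{2s - (d+1)})`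
(`kernel_taylor`). No multivariate Taylor theorem is needed. The polynomial part integrates to zero
against the atoms (`integral_mul_inner_pow_eq_zero`, `separated_integral`), so that `|I_α|` is at
most a constant times `l_{j0}^{d+1}` times the integral of any majorant of `T^{2s - (d+1)}` on the product of the
cubes (`abs_Iα_le`).

On that product `T` dominates both `S`, a multiple of `max_{j ∈ A} (|x - z_j| + l_j)`, and
`|x - y_i|` for `i ∉ A`. Splitting the power of `T` accordingly (`rpow_split`) gives a majorant in
product form: the variables in `A` contribute the volumes `l_j^n` (`volume_cube_le`), the others
contribute `∫ (S + |x - y|)^{-n-ε} dy ≲ S^{-ε}` (`integral_tail`). What remains is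
`l_{j0}^{d+1} S^{-(|A| n + d + 1 - α)} ∏_{j ∈ A} l_j^n`, which is distributed evenly over `A` because
`l_{j0} ≤ l_j` and `|x - z_j| + l_j ≲ S`. For `j ∉ A`, `|x - z_j| ≲ l_j`, so the second product of
the bound is bounded below.
-/


open MeasureTheory Filter Set
open scoped ENNReal BigOperators NNReal

noncomputable section

abbrev Eu (n : ℕ) := EuclideanSpace ℝ (Fin n)

variable {n : ℕ}

/-- The modular of the variable Lebesgue space. -/
def vModular (p f : Eu n → ℝ) (l : ℝ) : ℝ≥0∞ :=
  ∫⁻ x, ENNReal.ofReal ((|f x| / l) ^ p x)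

/-- Membership in the variable Lebesgue space `L^{p(·)}`. -/
def MemVLp (p f : Eu n → ℝ) : Prop :=
  Measurable f ∧ ∃ l : ℝ, 0 < l ∧ vModular p f l ≤ 1

/-- The Luxemburg norm on `L^{p(·)}`. -/
def vLpNorm (p f : Eu n → ℝ) : ℝ :=
  sInf {l : ℝ | 0 < l ∧ vModular p f l ≤ 1}

/-- The log-Hölder continuity condition. -/
def LogHolder (p : Eu n → ℝ) : Prop :=
  ∃ C : ℝ, (∀ x y : Eu n, dist x y ≤ 1 / 2 → |p x - p y| ≤ C / (-Real.log (dist x y))) ∧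
    (∀ x y : Eu n, ‖x‖ ≤ ‖y‖ → |p x - p y| ≤ C / Real.log (Real.exp 1 + ‖x‖))

/-- `p` is measurable with `0 < p⁻ ≤ p⁺ < ∞`. -/
def GoodExp (p : Eu n → ℝ) : Prop :=
  Measurable p ∧ (∀ x, 0 < p x) ∧ 0 < essInf p volume ∧ ∃ B : ℝ, ∀ x, p x ≤ B

/-- The (axis-parallel) cube with center `z` and side length `r`. -/
def cube (z : Eu n) (r : ℝ) : Set (Eu n) := {x | ∀ i, |x i - z i| ≤ r / 2}

/-- The concentric dilate `Q*` with side length `100 √n` times that of `Q`. -/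
def cubeStar (z : Eu n) (r : ℝ) : Set (Eu n) := cube z (100 * Real.sqrt n * r)

/-- The fractional maximal operator `M_α`. -/
def fracMax (α : ℝ) (f : Eu n → ℝ) (x : Eu n) : ℝ :=
  sSup {v | ∃ (z : Eu n) (r : ℝ), 0 < r ∧ x ∈ cube z r ∧
    v = (volume (cube z r)).toReal ^ (α / n - 1) * ∫ y in cube z r, |f y|}

/-- The multilinear fractional integral `I_α`. -/
def Iα {m : ℕ} (α : ℝ) (f : Fin m → Eu n → ℝ) (x : Eu n) : ℝ :=
  ∫ y : Fin m → Eu n, Real.sqrt (∑ i, ‖x - y i‖ ^ 2) ^ (α - m * n) * ∏ i, f i (y i)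

/-- The commutator `[b, I_α]_j`. -/
def commIα {m : ℕ} (α : ℝ) (b : Eu n → ℝ) (j : Fin m) (f : Fin m → Eu n → ℝ) (x : Eu n) : ℝ :=
  ∫ y : Fin m → Eu n, (b x - b (y j)) * (∑ i, dist x (y i)) ^ (α - m * n) * ∏ i, f i (y i)

/-- The average of `b` over the cube `Q(z,r)`. -/
def cubeAvg (b : Eu n → ℝ) (z : Eu n) (r : ℝ) : ℝ :=
  (volume (cube z r)).toReal⁻¹ * ∫ x in cube z r, b x

/-- The set of mean oscillations of `b` over cubes. -/
def bmoSet (b : Eu n → ℝ) : Set ℝ :=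
  {v | ∃ (z : Eu n) (r : ℝ), 0 < r ∧
    v = (volume (cube z r)).toReal⁻¹ * ∫ x in cube z r, |b x - cubeAvg b z r|}

/-- The BMO norm of `b`. -/
def bmoNorm (b : Eu n → ℝ) : ℝ := sSup (bmoSet b)

/-- Vanishing moments up to order `d`. -/
def momentsVanish (d : ℕ) (a : Eu n → ℝ) : Prop :=
  ∀ β : Fin n → ℕ, (∑ i, β i) ≤ d → (∫ x, a x * ∏ i, x i ^ β i) = 0

/-- A `(p(·), b, d, ∞)`-atom supported on the cube `Q(z,r)`. -/
def IsBAtom (p b : Eu n → ℝ) (d : ℕ) (z : Eu n) (r : ℝ) (a : Eu n → ℝ) : Prop :=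
  Measurable a ∧ (∀ x, x ∉ cube z r → a x = 0) ∧
    (∀ x, |a x| ≤ 1 / vLpNorm p ((cube z r).indicator 1)) ∧
    momentsVanish d a ∧ momentsVanish d (fun x => a x * b x)

/-- The family `F_N` of normalizing Schwartz functions. -/
def FNset (N : ℕ) : Set (SchwartzMap (Eu n) ℝ) :=
  {ψ | (∫ x, ψ x) = 1 ∧
    (∑ k ∈ Finset.range (N + 1), ⨆ x : Eu n, (1 + ‖x‖) ^ N * ‖iteratedFDeriv ℝ k (⇑ψ) x‖) ≤ 1}

/-- The grand maximal function `ℳ f`. -/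
def grandMax (N : ℕ) (f : Eu n → ℝ) (x : Eu n) : ℝ :=
  sSup {v | ∃ ψ ∈ FNset (n := n) N, ∃ t : ℝ, 0 < t ∧
    v = |∫ y, t ^ (-(n : ℝ)) * ψ (t⁻¹ • (x - y)) * f y|}

/-! ### Binomial expansion -/

/-- Taylor expansion of `(1 + w) ^ s` at `0`, with a remainder bound uniform on `|w| < 1/2`. -/
lemma one_add_rpow_taylor (s : ℝ) (d : ℕ) : ∃ c : ℕ → ℝ, ∃ C : ℝ, 0 < C ∧ ∀ w : ℝ, |w| < 1 / 2 →
    |(1 + w) ^ s - ∑ k ∈ Finset.range (d + 1), c k * w ^ k| ≤ C * |w| ^ (d + 1) := by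
  have h := Real.one_add_rpow_hasFPowerSeriesOnBall_zero (a := s)
  obtain ⟨t, ht, C, hC, H⟩ := h.uniform_geometric_approx' (r' := 1 / 2)
    (by rw [ENNReal.coe_lt_one_iff]; exact NNReal.half_lt_self one_ne_zero)
  refine ⟨fun k => Ring.choose s k, C * (t * 2) ^ (d + 1), by have := ht.1; positivity, ?_⟩
  intro w hw
  have := H w (by simpa using hw) (d + 1)
  simp only [zero_add, FormalMultilinearSeries.partialSum, binomialSeries_apply, List.ofFn_const,
    List.prod_replicate, smul_eq_mul, Real.norm_eq_abs] at this
  refine this.trans (le_of_eq ?_)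
  push_cast
  rw [mul_assoc, ← mul_pow]
  congr 2
  ring

/-- Expansion of `(1 + u + v) ^ s` where `u` has weight one and `v` weight two: only monomials
`u ^ p v ^ q` of weight `p + 2q ≤ d` are kept, the others being `O(r ^ (d + 1))`. -/
lemma taylor_two_var (s : ℝ) (d : ℕ) : ∃ (ι : Type) (F : Finset ι) (e : ι → ℝ) (p q : ι → ℕ),
    (∀ i ∈ F, p i + 2 * q i ≤ d) ∧ ∃ C : ℝ, 0 < C ∧ ∀ u v r : ℝ, 0 ≤ r → r ≤ 1 / 10 →
      |u| ≤ 2 * r → |v| ≤ r ^ 2 →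
      |(1 + (u + v)) ^ s - ∑ i ∈ F, e i * u ^ p i * v ^ q i| ≤ C * r ^ (d + 1) := by
  obtain ⟨c, C, hC, H⟩ := one_add_rpow_taylor s d
  let G : Finset (Σ _ : ℕ, ℕ) := (Finset.range (d + 1)).sigma (fun k => Finset.range (k + 1))
  let e : (Σ _ : ℕ, ℕ) → ℝ := fun x => c x.1 * (x.1.choose x.2)
  let p : (Σ _ : ℕ, ℕ) → ℕ := fun x => x.2
  let q : (Σ _ : ℕ, ℕ) → ℕ := fun x => x.1 - x.2
  refine ⟨(Σ _ : ℕ, ℕ), G.filter (fun x => p x + 2 * q x ≤ d), e, p, q, by simp,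
    C * 3 ^ (d + 1) + ∑ x ∈ G, |e x| * 2 ^ p x, by positivity, ?_⟩
  intro u v r hr0 hr hu hv
  have huv : |u + v| ≤ 3 * r := by
    refine (abs_add_le _ _).trans ?_
    nlinarith
  have h1 := H (u + v) (by linarith)
  have hsum : ∑ k ∈ Finset.range (d + 1), c k * (u + v) ^ k =
      ∑ x ∈ G, e x * u ^ p x * v ^ q x := by
    rw [Finset.sum_sigma]
    refine Finset.sum_congr rfl fun k _ => ?_
    rw [add_pow, Finset.mul_sum]
    refine Finset.sum_congr rfl fun i _ => ?_
    simp only [e, p, q]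
    ring
  have h2 : |∑ x ∈ G, e x * u ^ p x * v ^ q x -
      ∑ x ∈ G.filter (fun x => p x + 2 * q x ≤ d), e x * u ^ p x * v ^ q x| ≤
      (∑ x ∈ G, |e x| * 2 ^ p x) * r ^ (d + 1) := by
    rw [Finset.sum_filter, ← Finset.sum_sub_distrib, Finset.sum_mul]
    refine (Finset.abs_sum_le_sum_abs _ _).trans (Finset.sum_le_sum fun x _ => ?_)
    split_ifs with hx
    · simp only [sub_self, abs_zero]; positivity
    · rw [sub_zero, abs_mul, abs_mul, abs_pow, abs_pow]
      calc |e x| * |u| ^ p x * |v| ^ q x ≤ |e x| * (2 * r) ^ p x * (r ^ 2) ^ q x := by gcongr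
        _ = |e x| * 2 ^ p x * r ^ (p x + 2 * q x) := by rw [mul_pow, ← pow_mul, pow_add]; ring
        _ ≤ |e x| * 2 ^ p x * r ^ (d + 1) := by
            gcongr ?_ * ?_
            exact pow_le_pow_of_le_one hr0 (by linarith) (by omega)
  rw [hsum] at h1
  have h3 : C * |u + v| ^ (d + 1) ≤ C * 3 ^ (d + 1) * r ^ (d + 1) := by
    rw [mul_assoc, ← mul_pow]; gcongr
  calc _ ≤ _ := abs_sub_le _ (∑ x ∈ G, e x * u ^ p x * v ^ q x) _
    _ ≤ _ := by rw [add_mul]; exact add_le_add (h1.trans h3) h2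

/-! ### Cubes and vanishing moments -/

lemma norm_sub_le_of_mem_cube {z y : Eu n} {l : ℝ} (hl : 0 ≤ l) (hy : y ∈ cube z l) :
    ‖y - z‖ ≤ √n * l / 2 := by
  rw [EuclideanSpace.norm_eq]
  have : ∑ i, ‖(y - z) i‖ ^ 2 ≤ n * (l / 2) ^ 2 := by
    calc _ ≤ ∑ _i : Fin n, (l / 2) ^ 2 := by
          refine Finset.sum_le_sum fun i _ => ?_
          have := hy i
          simp only [PiLp.sub_apply, Real.norm_eq_abs]
          gcongr
      _ = _ := by simp
  refine (Real.sqrt_le_sqrt this).trans (le_of_eq ?_)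
  rw [Real.sqrt_mul (by positivity), Real.sqrt_sq (by positivity)]
  ring

lemma lt_norm_sub_of_notMem_cubeStar {z x : Eu n} {l : ℝ}
    (hx : x ∉ cubeStar z l) : 50 * √n * l < ‖x - z‖ := by
  simp only [cubeStar, cube, mem_ofPred_eq, not_forall, not_le] at hx
  obtain ⟨i, hi⟩ := hx
  have := PiLp.norm_apply_le (x - z) i
  simp only [PiLp.sub_apply, Real.norm_eq_abs] at this
  linarith

lemma measurableSet_cube (z : Eu n) (l : ℝ) : MeasurableSet (cube z l) := by
  have : IsClosed (cube z l) := by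
    simp only [cube, ofPred_forall]
    exact isClosed_iInter fun i => isClosed_le (by fun_prop) (by fun_prop)
  exact this.measurableSet

lemma cube_subset_closedBall {z : Eu n} {l : ℝ} (hl : 0 ≤ l) :
    cube z l ⊆ Metric.closedBall z (√n * l / 2) := fun y hy => by
  rw [Metric.mem_closedBall, dist_eq_norm]
  exact norm_sub_le_of_mem_cube hl hy

lemma integrable_mul_of_le_indicator {z : Eu n} {l : ℝ} (hl : 0 ≤ l) {a g : Eu n → ℝ}
    (ha : Measurable a) (hb : ∀ y, |a y| ≤ (cube z l).indicator 1 y) (hg : Continuous g) :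
    Integrable (fun y => a y * g y) := by
  have hK := isCompact_closedBall z (√n * l / 2)
  obtain ⟨B, hB⟩ := hK.exists_bound_of_continuousOn hg.continuousOn
  have hi : Integrable ((Metric.closedBall z (√n * l / 2)).indicator fun _ => B) :=
    (integrable_indicator_iff measurableSet_closedBall).2
      (integrableOn_const hK.measure_lt_top.ne)
  refine hi.mono' (ha.mul hg.measurable).aestronglyMeasurable (Eventually.of_forall fun y => ?_)
  rw [Real.norm_eq_abs, abs_mul]
  have h1 := hb y
  by_cases hy : y ∈ cube z l
  · have hy' := cube_subset_closedBall hl hy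
    rw [indicator_of_mem hy, Pi.one_apply] at h1
    rw [indicator_of_mem hy']
    have := hB y hy'
    rw [Real.norm_eq_abs] at this
    nlinarith [abs_nonneg (g y), abs_nonneg (a y)]
  · rw [indicator_of_notMem hy] at h1
    have h0 : |a y| = 0 := le_antisymm h1 (abs_nonneg _)
    rw [h0, zero_mul]
    by_cases hy' : y ∈ Metric.closedBall z (√n * l / 2)
    · rw [indicator_of_mem hy']
      exact (norm_nonneg _).trans (hB y hy')
    · rw [indicator_of_notMem hy']

/-- Vanishing monomial moments kill all polynomials of total degree at most `d`. -/
lemma integral_mul_eval_eq_zero {d : ℕ} {z : Eu n} {l : ℝ} (hl : 0 ≤ l) {a : Eu n → ℝ}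
    (ha : Measurable a) (hb : ∀ y, |a y| ≤ (cube z l).indicator 1 y) (hm : momentsVanish d a)
    (P : MvPolynomial (Fin n) ℝ) (hP : P.totalDegree ≤ d) :
    ∫ y, a y * MvPolynomial.eval (fun i => y i) P = 0 := by
  simp_rw [MvPolynomial.eval_eq', Finset.mul_sum]
  rw [integral_finsetSum]
  · refine Finset.sum_eq_zero fun β hβ => ?_
    have h0 : ∫ y, a y * ∏ i, y i ^ β i = 0 := by
      refine hm β (le_trans ?_ hP)
      have := MvPolynomial.le_totalDegree hβ
      rwa [Finsupp.sum_fintype _ _ (fun _ => rfl)] at this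
    calc _ = ∫ y, P.coeff β * (a y * ∏ i, y i ^ β i) := by
          refine integral_congr_ae (Eventually.of_forall fun y => ?_)
          simp only
          ring
      _ = 0 := by rw [integral_const_mul, h0, mul_zero]
  · intro β _
    exact integrable_mul_of_le_indicator hl ha hb (by fun_prop)

/-- The special polynomials that occur in `kernel_taylor` are annihilated by the moment condition. -/
lemma integral_mul_inner_pow_eq_zero {d : ℕ} {z : Eu n} {l : ℝ} (hl : 0 ≤ l) {a : Eu n → ℝ}
    (ha : Measurable a) (hb : ∀ y, |a y| ≤ (cube z l).indicator 1 y) (hm : momentsVanish d a)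
    (x : Eu n) (p q : ℕ) (hpq : p + 2 * q ≤ d) :
    ∫ y, a y * (inner ℝ (x - z) (y - z) ^ p * (‖y - z‖ ^ 2) ^ q) = 0 := by
  let L : MvPolynomial (Fin n) ℝ :=
    ∑ i, MvPolynomial.C ((x - z) i) * (MvPolynomial.X i - MvPolynomial.C (z i))
  let N : MvPolynomial (Fin n) ℝ := ∑ i, (MvPolynomial.X i - MvPolynomial.C (z i)) ^ 2
  have hX : ∀ i, (MvPolynomial.X i - MvPolynomial.C (z i) : MvPolynomial (Fin n) ℝ).totalDegree
      ≤ 1 := fun i => (MvPolynomial.totalDegree_sub_C_le _ _).trans (by simp)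
  have hL : L.totalDegree ≤ 1 := by
    refine MvPolynomial.totalDegree_finsetSum_le fun i _ => ?_
    refine (MvPolynomial.totalDegree_mul _ _).trans ?_
    rw [MvPolynomial.totalDegree_C, zero_add]
    exact hX i
  have hN : N.totalDegree ≤ 2 := by
    refine MvPolynomial.totalDegree_finsetSum_le fun i _ => ?_
    refine (MvPolynomial.totalDegree_pow _ _).trans ?_
    have := hX i
    omega
  have hd : (L ^ p * N ^ q).totalDegree ≤ d := by
    refine (MvPolynomial.totalDegree_mul _ _).trans ?_
    have h1 := MvPolynomial.totalDegree_pow L p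
    have h2 := MvPolynomial.totalDegree_pow N q
    nlinarith
  rw [← integral_mul_eval_eq_zero hl ha hb hm _ hd]
  refine integral_congr_ae (Eventually.of_forall fun y => ?_)
  simp only [map_mul, map_pow]
  congr 3
  · simp only [L, map_sum, map_mul, map_sub, MvPolynomial.eval_C, MvPolynomial.eval_X,
      PiLp.inner_apply, PiLp.sub_apply, RCLike.inner_apply, conj_trivial]
    exact Finset.sum_congr rfl fun i _ => mul_comm _ _
  · rw [EuclideanSpace.norm_sq_eq]
    simp [N]

/-! ### Taylor expansion of the kernel in one variable -/

/-- The kernel as a function of one variable `y` near `z`, the other variables entering through `W`,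
is a combination of polynomials of degree at most `d` in `y`, up to the relative error
`(‖y - z‖ / √(‖x - z‖ ^ 2 + W)) ^ (d + 1)`. -/
lemma kernel_taylor (n : ℕ) (s : ℝ) (d : ℕ) :
    ∃ (ι : Type) (F : Finset ι) (e : ι → ℝ) (p q : ι → ℕ),
    (∀ i ∈ F, p i + 2 * q i ≤ d) ∧ ∃ C : ℝ, 0 < C ∧ ∀ (x z y : Eu n) (W : ℝ), 0 ≤ W →
      0 < ‖x - z‖ → ‖y - z‖ ≤ ‖x - z‖ / 10 →
      |(‖x - y‖ ^ 2 + W) ^ s - ∑ i ∈ F, e i * ((‖x - z‖ ^ 2 + W) ^ s *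
          (‖x - z‖ ^ 2 + W)⁻¹ ^ (p i + q i)) *
          (inner ℝ (x - z) (y - z) ^ p i * (‖y - z‖ ^ 2) ^ q i)| ≤
        C * (‖x - z‖ ^ 2 + W) ^ s * (‖y - z‖ / √(‖x - z‖ ^ 2 + W)) ^ (d + 1) := by
  obtain ⟨ι, F, e, p, q, hpq, C, hC, H⟩ := taylor_two_var s d
  refine ⟨ι, F, fun i => e i * (-2) ^ p i, p, q, hpq, C, hC, ?_⟩
  intro x z y W hW hxz hyz
  set D := ‖x - z‖ ^ 2 + W with hD
  have hDpos : 0 < D := by positivity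
  have hT : 0 < √D := Real.sqrt_pos.2 hDpos
  have hxT : ‖x - z‖ ≤ √D := Real.le_sqrt_of_sq_le (by linarith)
  have hTT : √D * √D = D := Real.mul_self_sqrt hDpos.le
  set b := inner ℝ (x - z) (y - z) with hb
  have hxy : ‖x - y‖ ^ 2 = ‖x - z‖ ^ 2 - 2 * b + ‖y - z‖ ^ 2 := by
    rw [hb, ← norm_sub_sq_real]; congr 2; abel
  have hr : ‖y - z‖ / √D ≤ 1 / 10 := by
    rw [div_le_iff₀ hT]; linarith
  have hu : |-2 * b * D⁻¹| ≤ 2 * (‖y - z‖ / √D) := by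
    have h1 : |b| ≤ √D * ‖y - z‖ :=
      (abs_real_inner_le_norm _ _).trans (by gcongr)
    rw [abs_mul, abs_mul, abs_of_pos (inv_pos.2 hDpos), abs_neg, abs_two]
    calc 2 * |b| * D⁻¹ ≤ 2 * (√D * ‖y - z‖) * D⁻¹ := by gcongr
      _ = 2 * (‖y - z‖ / √D) := by
        nth_rewrite 2 [← hTT]
        field_simp
  have hv : |‖y - z‖ ^ 2 * D⁻¹| ≤ (‖y - z‖ / √D) ^ 2 := by
    rw [abs_of_nonneg (by positivity), div_pow, Real.sq_sqrt hDpos.le, div_eq_mul_inv]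
  have key := H _ _ _ (by positivity) hr hu hv
  have h1uv : ‖x - y‖ ^ 2 + W = D * (1 + (-2 * b * D⁻¹ + ‖y - z‖ ^ 2 * D⁻¹)) := by
    rw [hxy]
    field_simp
    rw [hD]; ring
  have hnn : 0 ≤ 1 + (-2 * b * D⁻¹ + ‖y - z‖ ^ 2 * D⁻¹) := by
    have h0 : 0 ≤ D * (1 + (-2 * b * D⁻¹ + ‖y - z‖ ^ 2 * D⁻¹)) := by
      rw [← h1uv]; positivity
    exact nonneg_of_mul_nonneg_right h0 hDpos
  have hsum : ∑ i ∈ F, e i * (-2) ^ p i * (D ^ s * D⁻¹ ^ (p i + q i)) *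
      (b ^ p i * (‖y - z‖ ^ 2) ^ q i) =
      D ^ s * ∑ i ∈ F, e i * (-2 * b * D⁻¹) ^ p i * (‖y - z‖ ^ 2 * D⁻¹) ^ q i := by
    rw [Finset.mul_sum]
    refine Finset.sum_congr rfl fun i _ => ?_
    simp only [mul_pow, pow_add]
    ring
  rw [h1uv, Real.mul_rpow hDpos.le hnn, hsum, ← mul_sub, abs_mul,
    abs_of_nonneg (Real.rpow_nonneg hDpos.le s)]
  calc _ ≤ D ^ s * (C * (‖y - z‖ / √D) ^ (d + 1)) := by gcongr
    _ = _ := by ring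

/-! ### The majorant and its integral -/

lemma volume_cube_le (n : ℕ) : ∃ V : ℝ, 0 < V ∧ ∀ (z : Eu n) (l : ℝ), 0 < l →
    Integrable ((cube z l).indicator (1 : Eu n → ℝ)) ∧
    ∫ y, (cube z l).indicator (1 : Eu n → ℝ) y ≤ V * l ^ (n : ℝ) := by
  let v : ℝ := volume.real (Metric.ball (0 : Eu n) 1)
  have hv : 0 ≤ v := measureReal_nonneg
  refine ⟨(√n / 2) ^ n * v + 1, by positivity, fun z l hl => ?_⟩
  have hfin : volume (cube z l) ≠ ∞ :=
    ((measure_mono (cube_subset_closedBall hl.le)).trans_lt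
      (isCompact_closedBall _ _).measure_lt_top).ne
  refine ⟨(integrable_indicator_iff (measurableSet_cube z l)).2 (integrableOn_const hfin), ?_⟩
  rw [integral_indicator_one (measurableSet_cube z l), Real.rpow_natCast]
  have h1 : volume.real (cube z l) ≤ volume.real (Metric.closedBall z (√n * l / 2)) :=
    measureReal_mono (cube_subset_closedBall hl.le) (isCompact_closedBall _ _).measure_lt_top.ne
  rw [Measure.addHaar_real_closedBall _ _ (by positivity), finrank_euclideanSpace_fin] at h1
  have h2 : (√n * l / 2) ^ n = (√n / 2) ^ n * l ^ n := by rw [← mul_pow]; ring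
  rw [h2] at h1
  have : 0 ≤ l ^ n := by positivity
  change _ ≤ _ * v at h1
  nlinarith

/-- Obtained from `∫ (1 + ‖u‖) ^ (-(n + ε))` by the substitution `y = x - S u`. -/
lemma integral_tail (n : ℕ) (ε : ℝ) (hε : 0 < ε) : ∃ J : ℝ, 0 < J ∧ ∀ (x : Eu n) (S : ℝ), 0 < S →
    Integrable (fun y : Eu n => ((S + ‖x - y‖) / 2) ^ (-(n + ε))) ∧
    ∫ y : Eu n, ((S + ‖x - y‖) / 2) ^ (-(n + ε)) ≤ J * S ^ (-ε) := by
  let g : Eu n → ℝ := fun u => (1 + ‖u‖) ^ (-(n + ε))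
  have hg : Integrable g := integrable_one_add_norm (by simpa using hε)
  have hg0 : 0 ≤ ∫ u, g u := integral_nonneg fun u => by positivity
  refine ⟨2 ^ (n + ε) * (∫ u, g u) + 1, by positivity, fun x S hS => ?_⟩
  have heq : (fun y : Eu n => ((S + ‖x - y‖) / 2) ^ (-(n + ε))) =
      fun y => (S / 2) ^ (-(n + ε)) * g (S⁻¹ • (x - y)) := by
    ext y
    simp only [g]
    rw [← Real.mul_rpow (by positivity) (by positivity), norm_smul, norm_inv, Real.norm_eq_abs,
      abs_of_pos hS]
    congr 1
    field_simp
  have hgs : Integrable (fun u => g (S⁻¹ • u)) := hg.comp_smul (inv_ne_zero hS.ne')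
  rw [heq]
  refine ⟨(hgs.comp_sub_left x).const_mul _, ?_⟩
  rw [integral_const_mul, integral_sub_left_eq_self (fun u => g (S⁻¹ • u)) volume x,
    Measure.integral_comp_smul, finrank_euclideanSpace_fin, smul_eq_mul,
    abs_of_pos (by positivity), inv_pow, inv_inv, Real.div_rpow hS.le zero_le_two]
  have h1 : S ^ (-(n + ε)) * S ^ n = S ^ (-ε) := by
    rw [← Real.rpow_natCast, ← Real.rpow_add hS]; congr 1; ring
  have h2 : ((2 : ℝ) ^ (-(n + ε)))⁻¹ = 2 ^ (n + ε) := by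
    rw [Real.rpow_neg zero_le_two, inv_inv]
  rw [div_eq_mul_inv, h2]
  have h3 : S ^ (-(n + ε)) * 2 ^ (n + ε) * (S ^ n * ∫ u, g u) =
    2 ^ (n + ε) * (∫ u, g u) * S ^ (-ε) := by rw [← h1]; ring
  rw [h3]
  have : 0 ≤ S ^ (-ε) := by positivity
  nlinarith

/-- A negative power of `T` splits into negative powers of any lower bounds of `T`. -/
lemma rpow_split {ι : Type*} (t : Finset ι) (T S σ σ₁ θ : ℝ) (hS : 0 < S) (hST : S ≤ T)
    (v : ι → ℝ) (hv : ∀ i ∈ t, 0 < v i ∧ v i ≤ T) (hσ₁ : 0 ≤ σ₁) (hθ : 0 ≤ θ)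
    (hσ : σ = σ₁ + t.card * θ) :
    T ^ (-σ) ≤ S ^ (-σ₁) * ∏ i ∈ t, v i ^ (-θ) := by
  have hT : 0 < T := hS.trans_le hST
  have h1 : T ^ (-σ) = T ^ (-σ₁) * ∏ _i ∈ t, T ^ (-θ) := by
    rw [Finset.prod_const, ← Real.rpow_natCast, ← Real.rpow_mul hT.le, ← Real.rpow_add hT, hσ]
    congr 1; ring
  rw [h1]
  refine mul_le_mul (Real.rpow_le_rpow_of_nonpos hS hST (by linarith)) ?_ (by positivity)
    (by positivity)
  refine Finset.prod_le_prod (fun i _ => by positivity) fun i hi => ?_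
  exact Real.rpow_le_rpow_of_nonpos (hv i hi).1 (hv i hi).2 (by linarith)

/-! ### Reduction to the Taylor remainder -/

/-- A function of `y j0` with zero integral, times a function of the remaining variables, has zero
integral. -/
lemma separated_integral {n M : ℕ} (j0 : Fin (M + 1)) (H : (Fin M → Eu n) → ℝ)
    (hH : Measurable H) (B : ℝ) (hB : ∀ w, |H w| ≤ B) (f : Eu n → ℝ) (hf : Integrable f)
    (hf0 : ∫ y, f y = 0) (b : Fin M → Eu n → ℝ) (hb : ∀ i, Integrable (b i)) :
    Integrable (fun y : Fin (M + 1) → Eu n =>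
      f (y j0) * (H (fun i => y (j0.succAbove i)) * ∏ i, b i (y (j0.succAbove i)))) ∧
    ∫ y : Fin (M + 1) → Eu n,
      f (y j0) * (H (fun i => y (j0.succAbove i)) * ∏ i, b i (y (j0.succAbove i))) = 0 := by
  have hmp := volume_preserving_piFinSuccAbove (fun _ : Fin (M + 1) => Eu n) j0
  let g : (Fin M → Eu n) → ℝ := fun w => H w * ∏ i, b i (w i)
  have hg : Integrable g :=
    (Integrable.fintype_prod (f := b) hb).bdd_mul (c := B) hH.aestronglyMeasurable
      (Eventually.of_forall hB)
  have hprod : Integrable (fun w : Eu n × (Fin M → Eu n) => f w.1 * g w.2) := hf.mul_prod hg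
  constructor
  · exact hmp.integrable_comp_of_integrable hprod
  · have h1 := hmp.integral_comp' (g := fun w : Eu n × (Fin M → Eu n) => f w.1 * g w.2)
    have h2 : ∫ w : Eu n × (Fin M → Eu n), f w.1 * g w.2 = (∫ y, f y) * ∫ w, g w :=
      integral_prod_mul f g
    rw [h2, hf0, zero_mul] at h1
    exact h1

lemma remainder_le {C D s r ρ : ℝ} (d : ℕ) (hC : 0 ≤ C) (hD : 0 < D) (hr : 0 ≤ r) (hrρ : r ≤ ρ) :
    C * D ^ s * (r / √D) ^ (d + 1) ≤ C * ρ ^ (d + 1) * √D ^ (2 * s - (d + 1)) := by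
  have hT : 0 < √D := Real.sqrt_pos.2 hD
  have h1 : √D ^ (2 * s - (d + 1)) = D ^ s * (√D ^ (d + 1))⁻¹ := by
    have h2 : √D ^ (2 * s) = D ^ s := by
      rw [Real.rpow_mul hT.le, Real.rpow_two, Real.sq_sqrt hD.le]
    rw [Real.rpow_sub hT, h2, div_eq_mul_inv, ← Real.rpow_natCast]
    push_cast
    rfl
  calc _ ≤ C * D ^ s * (ρ / √D) ^ (d + 1) := by gcongr
    _ = _ := by rw [h1, div_pow, div_eq_mul_inv]; ring

/-- Cancellation in the variable `j0`, where `x` lies outside the dilated cube: the integral is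
controlled by any majorant `G` of the size of the Taylor remainder on the product of the cubes. -/
lemma abs_Iα_le {n M : ℕ} (hn : 0 < n) (α : ℝ) (hα : α ≤ (M + 1 : ℕ) * n) (d : ℕ) :
    ∃ C : ℝ, 0 < C ∧
      ∀ (z : Fin (M + 1) → Eu n) (l : Fin (M + 1) → ℝ) (a : Fin (M + 1) → Eu n → ℝ),
        (∀ j, 0 < l j) → (∀ j, Measurable (a j)) →
        (∀ j x, |a j x| ≤ (cube (z j) (l j)).indicator 1 x) →
        (∀ j, momentsVanish d (a j)) →
        ∀ (x : Eu n) (j0 : Fin (M + 1)), x ∉ cubeStar (z j0) (l j0) →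
        ∀ G : (Fin (M + 1) → Eu n) → ℝ, Integrable G → (∀ y, 0 ≤ G y) →
        (∀ y, (∀ i, y i ∈ cube (z i) (l i)) →
          √(‖x - z j0‖ ^ 2 + ∑ i, ‖x - y (j0.succAbove i)‖ ^ 2) ^
            (-((M + 1 : ℕ) * n - α + (d + 1))) ≤ G y) →
        |Iα α a x| ≤ C * l j0 ^ (d + 1) * ∫ y, G y := by
  set s : ℝ := (α - (M + 1 : ℕ) * n) / 2 with hs
  have hs0 : s ≤ 0 := by rw [hs]; linarith
  obtain ⟨ι, F, e, p, q, hpq, C, hC, H⟩ := kernel_taylor n s d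
  have hsn : 0 < √(n : ℝ) := Real.sqrt_pos.2 (by exact_mod_cast hn)
  refine ⟨C * (√n / 2) ^ (d + 1), by positivity, ?_⟩
  intro z l a hl ha hab hmom x j0 hx G hG hG0 hGb
  have hxz := lt_norm_sub_of_notMem_cubeStar hx
  have hpos : 0 < ‖x - z j0‖ := lt_of_le_of_lt (by have := hl j0; positivity) hxz
  let W : (Fin M → Eu n) → ℝ := fun w => ∑ i, ‖x - w i‖ ^ 2
  have hW : ∀ w, 0 ≤ W w := fun w => Finset.sum_nonneg fun i _ => by positivity
  let rem : (Fin (M + 1) → Eu n) → (Fin M → Eu n) := fun y i => y (j0.succAbove i)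
  let D : (Fin M → Eu n) → ℝ := fun w => ‖x - z j0‖ ^ 2 + W w
  have hDlb : ∀ w, ‖x - z j0‖ ^ 2 ≤ D w := fun w => le_add_of_nonneg_right (hW w)
  have hDpos : ∀ w, 0 < D w := fun w => lt_of_lt_of_le (by positivity) (hDlb w)
  have hDmeas : Measurable D := by
    simp only [D, W]
    fun_prop
  let P : (Fin (M + 1) → Eu n) → ℝ := fun y => ∑ i ∈ F, e i * ((D (rem y)) ^ s *
    (D (rem y))⁻¹ ^ (p i + q i)) *
    (inner ℝ (x - z j0) (y j0 - z j0) ^ p i * (‖y j0 - z j0‖ ^ 2) ^ q i)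
  have haint : ∀ j, Integrable (a j) := fun j => by
    simpa using integrable_mul_of_le_indicator (hl j).le (ha j) (hab j)
      (continuous_const : Continuous fun _ : Eu n => (1 : ℝ))
  have hcoef : ∀ (i : ι) (E : (Fin M → Eu n) → ℝ), Measurable E →
      Measurable fun w => e i * ((E w) ^ s * (E w)⁻¹ ^ (p i + q i)) := fun i E hE =>
    ((hE.pow_const s).mul (hE.inv.pow_const (p i + q i))).const_mul (e i)
  have hcoefb : ∀ (i : ι) (t : ℝ), ‖x - z j0‖ ^ 2 ≤ t →
      |e i * (t ^ s * t⁻¹ ^ (p i + q i))| ≤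
        |e i| * ((‖x - z j0‖ ^ 2) ^ s * (‖x - z j0‖ ^ 2)⁻¹ ^ (p i + q i)) := fun i t ht => by
    have ht0 : 0 < t := lt_of_lt_of_le (by positivity) ht
    have h3 : t ^ s ≤ (‖x - z j0‖ ^ 2) ^ s :=
      Real.rpow_le_rpow_of_nonpos (by positivity) ht hs0
    have h4 : 0 ≤ t ^ s * t⁻¹ ^ (p i + q i) := by positivity
    rw [abs_mul, abs_of_nonneg h4]
    gcongr
  -- each monomial of the Taylor polynomial is annihilated by the moments of `a j0`
  have hterm := fun i (hi : i ∈ F) => separated_integral j0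
    (fun w => e i * ((D w) ^ s * (D w)⁻¹ ^ (p i + q i)))
    (hcoef i D hDmeas)
    (|e i| * ((‖x - z j0‖ ^ 2) ^ s * (‖x - z j0‖ ^ 2)⁻¹ ^ (p i + q i)))
    (fun w => hcoefb i (D w) (hDlb w))
    (fun y => a j0 y * (inner ℝ (x - z j0) (y - z j0) ^ p i * (‖y - z j0‖ ^ 2) ^ q i))
    (integrable_mul_of_le_indicator (hl j0).le (ha j0) (hab j0) (by fun_prop))
    (integral_mul_inner_pow_eq_zero (hl j0).le (ha j0) (hab j0) (hmom j0) x _ _ (hpq i hi))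
    (fun i => a (j0.succAbove i)) (fun i => haint _)
  have hPsum : (fun y => P y * ∏ i, a i (y i)) = fun y => ∑ i ∈ F,
      (a j0 (y j0) * (inner ℝ (x - z j0) (y j0 - z j0) ^ p i * (‖y j0 - z j0‖ ^ 2) ^ q i)) *
      (e i * ((D (rem y)) ^ s * (D (rem y))⁻¹ ^ (p i + q i)) *
        ∏ k, a (j0.succAbove k) (y (j0.succAbove k))) := by
    ext y
    rw [Finset.sum_mul]
    refine Finset.sum_congr rfl fun i _ => ?_
    rw [Fin.prod_univ_succAbove _ j0]
    ring
  have hPint : Integrable (fun y => P y * ∏ i, a i (y i)) := by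
    rw [hPsum]
    exact integrable_finsetSum _ fun i hi => (hterm i hi).1
  have hP0 : ∫ y, P y * ∏ i, a i (y i) = 0 := by
    rw [hPsum, integral_finsetSum _ fun i hi => (hterm i hi).1]
    exact Finset.sum_eq_zero fun i hi => (hterm i hi).2
  let K : (Fin (M + 1) → Eu n) → ℝ := fun y =>
    √(∑ i, ‖x - y i‖ ^ 2) ^ (α - (M + 1 : ℕ) * n)
  have hK : ∀ y, K y = (‖x - y j0‖ ^ 2 + W (rem y)) ^ s := fun y => by
    have h0 : 0 ≤ ∑ i, ‖x - y i‖ ^ 2 := Finset.sum_nonneg fun i _ => by positivity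
    simp only [K]
    rw [Real.sqrt_eq_rpow, ← Real.rpow_mul h0, Fin.sum_univ_succAbove _ j0, hs]
    congr 1
    ring
  have hbound : ∀ y, ‖(K y - P y) * ∏ i, a i (y i)‖ ≤
      C * (√n / 2) ^ (d + 1) * l j0 ^ (d + 1) * G y := by
    intro y
    have hl0 := hl j0
    have hGy := hG0 y
    by_cases hy : ∀ i, y i ∈ cube (z i) (l i)
    · have h1 : ∏ i, |a i (y i)| ≤ 1 := by
        refine Finset.prod_le_one (fun i _ => abs_nonneg _) fun i _ => ?_
        have := hab i (y i)
        rwa [indicator_of_mem (hy i), Pi.one_apply] at this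
      have h2 := norm_sub_le_of_mem_cube (hl j0).le (hy j0)
      have h3 := H x (z j0) (y j0) (W (rem y)) (hW _) hpos (by linarith)
      rw [← hK] at h3
      have h4 := remainder_le (s := s) d hC.le (hDpos (rem y)) (norm_nonneg (y j0 - z j0)) h2
      have h5 : √(D (rem y)) ^ (2 * s - (d + 1)) ≤ G y := by
        have h6 : 2 * s - (d + 1) = -((M + 1 : ℕ) * n - α + (d + 1)) := by rw [hs]; ring
        rw [h6]
        exact hGb y hy
      have h7 : 0 ≤ C * (√n * l j0 / 2) ^ (d + 1) := by positivity
      rw [norm_mul, Real.norm_eq_abs, Real.norm_eq_abs, Finset.abs_prod]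
      calc |K y - P y| * ∏ i, |a i (y i)| ≤ |K y - P y| * 1 :=
            mul_le_mul_of_nonneg_left h1 (abs_nonneg _)
        _ = |K y - P y| := mul_one _
        _ ≤ C * (√n * l j0 / 2) ^ (d + 1) * √(D (rem y)) ^ (2 * s - (d + 1)) := h3.trans h4
        _ ≤ C * (√n * l j0 / 2) ^ (d + 1) * G y := mul_le_mul_of_nonneg_left h5 h7
        _ = _ := by rw [mul_div_right_comm, mul_pow, ← mul_assoc]
    · push Not at hy
      obtain ⟨i, hi⟩ := hy
      have h0 : a i (y i) = 0 := by
        have := hab i (y i)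
        rw [indicator_of_notMem hi] at this
        exact abs_nonpos_iff.1 this
      rw [Finset.prod_eq_zero (Finset.mem_univ i) h0, mul_zero, norm_zero]
      positivity
  have hfin := norm_integral_le_of_norm_le (hG.const_mul _) (Eventually.of_forall hbound)
  rw [integral_const_mul] at hfin
  -- when the kernel times the atoms is not integrable, `Iα` takes the junk value `0`
  by_cases hKint : Integrable (fun y => K y * ∏ i, a i (y i))
  · have h1 : Iα α a x = ∫ y, (K y - P y) * ∏ i, a i (y i) := by
      simp_rw [sub_mul]
      rw [integral_sub hKint hPint, hP0, sub_zero]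
      rfl
    rw [h1]
    exact hfin
  · have h1 : Iα α a x = 0 := integral_undef hKint
    rw [h1, abs_zero]
    exact (norm_nonneg _).trans hfin

/-! ### The pointwise estimate -/

/-- pointwise estimate for `I_α` applied to atoms with vanishing
moments, outside the dilated cubes indexed by `A` and inside the others. -/
theorem stmt10 {n m : ℕ} (hn : 0 < n) (hm : 0 < m)
    (α : ℝ) (hα : 0 < α) (hαn : α < n)
    (d : ℕ) (A : Finset (Fin m)) (hA : A.Nonempty) :
    ∃ C : ℝ, 0 < C ∧
      ∀ (z : Fin m → Eu n) (l : Fin m → ℝ) (a : Fin m → Eu n → ℝ),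
        (∀ j, 0 < l j) → (∀ j, Measurable (a j)) →
        (∀ j x, |a j x| ≤ (cube (z j) (l j)).indicator 1 x) →
        (∀ j, momentsVanish d (a j)) →
        ∀ x : Eu n, (∀ j ∈ A, x ∉ cubeStar (z j) (l j)) →
          (∀ j ∉ A, x ∈ cubeStar (z j) (l j)) →
          |Iα α a x| ≤ C *
            (∏ j ∈ A, l j ^ ((n : ℝ) + ((d : ℝ) + 1) / A.card) *
              (dist x (z j) + l j) ^
                (-(n : ℝ) - ((d : ℝ) + 1) / A.card + α / A.card)) *
            ∏ j ∈ Aᶜ, l j ^ ((n : ℝ) + ((d : ℝ) + 1) / A.card) *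
              (dist x (z j) + l j) ^ (-(n : ℝ) - ((d : ℝ) + 1) / A.card) := by
  obtain ⟨M, rfl⟩ : ∃ M, m = M + 1 := ⟨m - 1, by omega⟩
  have hn1 : (1 : ℝ) ≤ n := by exact_mod_cast hn
  have hsn1 : (1 : ℝ) ≤ √n := Real.one_le_sqrt.2 hn1
  have hk1 : (1 : ℝ) ≤ A.card := by exact_mod_cast hA.card_pos
  have hk0 : (A.card : ℝ) ≠ 0 := by positivity
  have hcard : (A.card : ℝ) + (Aᶜ.card : ℝ) = (M + 1 : ℕ) := by
    have := Finset.card_add_card_compl A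
    rw [Fintype.card_fin] at this
    exact_mod_cast this
  set k : ℝ := (A.card : ℝ) with hk
  set k' : ℝ := (Aᶜ.card : ℝ) with hk'
  have hk'0 : 0 ≤ k' := by positivity
  -- `ε` is small enough that splitting off `k'` factors of order `n + ε` leaves a power `σ₁ ≥ 0`
  set ε : ℝ := 1 / (M + 1 : ℕ) with hε
  have hε0 : 0 < ε := by positivity
  have hεk : k' * ε ≤ 1 := by
    rw [hε, mul_one_div, div_le_one (by positivity)]; linarith
  set σ₁ : ℝ := k * n + (d + 1) - α - k' * ε with hσ₁
  have hd0 : (0 : ℝ) ≤ d := by positivity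
  have hσ₁0 : 0 ≤ σ₁ := by
    have : (n : ℝ) ≤ k * n := by nlinarith
    rw [hσ₁]; linarith
  set η : ℝ := (n : ℝ) + ((d : ℝ) + 1) / k with hη
  have hη0 : 0 ≤ η := by positivity
  set θ : ℝ := (n : ℝ) + ((d : ℝ) + 1) / k - α / k with hθ
  have hθ0 : 0 ≤ θ := by
    have h1 : α / k ≤ α := div_le_self hα.le hk1
    have h2 : 0 ≤ ((d : ℝ) + 1) / k := by positivity
    rw [hθ]; linarith
  obtain ⟨C, hC, H⟩ := abs_Iα_le (M := M) hn α
    (by rw [← hcard]; nlinarith) d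
  obtain ⟨V, hV, HV⟩ := volume_cube_le n
  obtain ⟨J, hJ, HJ⟩ := integral_tail n ε hε0
  refine ⟨C * (∏ _j ∈ A, V * 4 ^ θ) * ∏ _j ∈ Aᶜ, J * (50 * n + 1) ^ η, by positivity, ?_⟩
  intro z l a hl ha hab hmom x hxA hxAc
  have hlt := fun j hj => lt_norm_sub_of_notMem_cubeStar (hxA j hj)
  have hρpos : ∀ j, 0 < dist x (z j) + l j := fun j => by have := hl j; positivity
  obtain ⟨j0, hj0, hmin⟩ := A.exists_min_image l hA
  obtain ⟨j1, hj1, hmax⟩ := A.exists_max_image (fun j => (dist x (z j) + l j) / 4) hA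
  set S := (dist x (z j1) + l j1) / 4 with hS
  have hS0 : 0 < S := by have := hρpos j1; positivity
  -- the factors of the product majorant
  let φ : Fin (M + 1) → Eu n → ℝ := fun i => if i ∈ A then (cube (z i) (l i)).indicator 1 else
    fun y => ((S + ‖x - y‖) / 2) ^ (-((n : ℝ) + ε))
  have hφ0 : ∀ i y, 0 ≤ φ i y := fun i y => by
    by_cases hi : i ∈ A
    · simp only [φ, hi, if_true]
      exact indicator_nonneg (fun _ _ => zero_le_one) _
    · simp only [φ, hi, if_false]
      positivity
  have hφint : ∀ i, Integrable (φ i) := fun i => by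
    by_cases hi : i ∈ A
    · simp only [φ, hi, if_true]
      exact (HV (z i) (l i) (hl i)).1
    · simp only [φ, hi, if_false]
      exact (HJ x S hS0).1
  have key := H z l a hl ha hab hmom x j0 (hxA j0 hj0)
    (fun y => S ^ (-σ₁) * ∏ i, φ i (y i))
    ((Integrable.fintype_prod (f := φ) hφint).const_mul _)
    (fun y => mul_nonneg (by positivity) (Finset.prod_nonneg fun i _ => hφ0 i _))
    (fun y hy => by
      set T := √(‖x - z j0‖ ^ 2 + ∑ i, ‖x - y (j0.succAbove i)‖ ^ 2) with hT
      have hT0 : ‖x - z j0‖ ≤ T := Real.le_sqrt_of_sq_le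
        (le_add_of_nonneg_right (Finset.sum_nonneg fun i _ => by positivity))
      have hTi : ∀ i, i ≠ j0 → ‖x - y i‖ ≤ T := fun i hi => by
        obtain ⟨i', rfl⟩ := Fin.exists_succAbove_eq hi
        refine Real.le_sqrt_of_sq_le ?_
        have := Finset.single_le_sum (f := fun i => ‖x - y (j0.succAbove i)‖ ^ 2)
          (fun i _ => by positivity) (Finset.mem_univ i')
        have h2 : 0 ≤ ‖x - z j0‖ ^ 2 := by positivity
        linarith
      have hST : S ≤ T := by
        have h1 := hlt j1 hj1
        have h2 : l j1 ≤ √n * l j1 := by have := hl j1; nlinarith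
        rw [hS, dist_eq_norm]
        by_cases hj : j1 = j0
        · rw [← hj] at hT0
          linarith [norm_nonneg (x - z j1)]
        · have h3 := hTi j1 hj
          have h4 := norm_sub_le_of_mem_cube (hl j1).le (hy j1)
          have h5 : ‖x - z j1‖ ≤ ‖x - y j1‖ + ‖y j1 - z j1‖ :=
            norm_sub_le_norm_sub_add_norm_sub _ _ _
          linarith [norm_nonneg (x - z j1)]
      have hprod : ∏ i, φ i (y i) = ∏ i ∈ Aᶜ, ((S + ‖x - y i‖) / 2) ^ (-((n : ℝ) + ε)) := by
        rw [← Finset.prod_mul_prod_compl A]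
        have h1 : ∏ i ∈ A, φ i (y i) = 1 := Finset.prod_eq_one fun i hi => by
          simp [φ, hi, indicator_of_mem (hy i)]
        rw [h1, one_mul]
        refine Finset.prod_congr rfl fun i hi => ?_
        simp [φ, Finset.mem_compl.1 hi]
      rw [hprod]
      refine rpow_split Aᶜ T S _ σ₁ (n + ε) hS0 hST _ (fun i hi => ⟨by positivity, ?_⟩) hσ₁0
        (by positivity) ?_
      · have h1 := hTi i (fun h => Finset.mem_compl.1 hi (h ▸ hj0))
        linarith
      · rw [← hk', hσ₁, ← hcard]; ring)
  rw [integral_const_mul, integral_fintype_prod_volume_eq_prod, ← Finset.prod_mul_prod_compl A]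
    at key
  have hIA : ∏ i ∈ A, ∫ y, φ i y ≤ ∏ i ∈ A, V * l i ^ (n : ℝ) :=
    Finset.prod_le_prod (fun i _ => integral_nonneg (hφ0 i)) fun i hi => by
      simp only [φ, hi, if_true]
      exact (HV (z i) (l i) (hl i)).2
  have hIAc : ∏ i ∈ Aᶜ, ∫ y, φ i y ≤ ∏ i ∈ Aᶜ, J * S ^ (-ε) :=
    Finset.prod_le_prod (fun i _ => integral_nonneg (hφ0 i)) fun i hi => by
      simp only [φ, Finset.mem_compl.1 hi, if_false]
      exact (HJ x S hS0).2
  have hl0' := hl j0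
  have hpl : l j0 ^ (d + 1) = ∏ _i ∈ A, l j0 ^ (((d : ℝ) + 1) / k) := by
    rw [Finset.prod_const, ← Real.rpow_natCast, ← Real.rpow_natCast, ← Real.rpow_mul hl0'.le, ← hk,
      div_mul_cancel₀ _ hk0]
    push_cast; rfl
  have hpS : S ^ (-σ₁) * ∏ _i ∈ Aᶜ, S ^ (-ε) = ∏ _i ∈ A, S ^ (-θ) := by
    rw [Finset.prod_const, Finset.prod_const, ← Real.rpow_natCast, ← Real.rpow_natCast,
      ← Real.rpow_mul hS0.le, ← Real.rpow_mul hS0.le, ← Real.rpow_add hS0, ← hk, ← hk', hσ₁, hθ]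
    congr 1
    field_simp
    ring
  have hA1 : (∏ _i ∈ A, l j0 ^ (((d : ℝ) + 1) / k)) * (∏ i ∈ A, V * l i ^ (n : ℝ)) *
      ∏ _i ∈ A, S ^ (-θ) ≤ (∏ _j ∈ A, V * 4 ^ θ) *
        ∏ j ∈ A, l j ^ η * (dist x (z j) + l j) ^ (-(n : ℝ) - ((d : ℝ) + 1) / k + α / k) := by
    rw [← Finset.prod_mul_distrib, ← Finset.prod_mul_distrib, ← Finset.prod_mul_distrib]
    refine Finset.prod_le_prod (fun i _ => by have := hl i; positivity) fun i hi => ?_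
    have hli := hl i
    have hρ := hρpos i
    have h1 : l j0 ^ (((d : ℝ) + 1) / k) ≤ l i ^ (((d : ℝ) + 1) / k) :=
      Real.rpow_le_rpow hl0'.le (hmin i hi) (by positivity)
    have h2 : S ^ (-θ) ≤ 4 ^ θ * (dist x (z i) + l i) ^ (-θ) := by
      refine (Real.rpow_le_rpow_of_nonpos (by positivity) (hmax i hi) (by linarith)).trans
        (le_of_eq ?_)
      rw [Real.div_rpow hρ.le (by norm_num), Real.rpow_neg (by norm_num : (0 : ℝ) ≤ 4),
        div_inv_eq_mul, mul_comm]
    have h3 : -(n : ℝ) - ((d : ℝ) + 1) / k + α / k = -θ := by rw [hθ]; ring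
    rw [h3, hη, Real.rpow_add hli]
    calc _ ≤ l i ^ (((d : ℝ) + 1) / k) * (V * l i ^ (n : ℝ)) *
          (4 ^ θ * (dist x (z i) + l i) ^ (-θ)) := by gcongr
      _ = _ := by ring
  have hAc1 : 1 ≤ ∏ j ∈ Aᶜ, (50 * (n : ℝ) + 1) ^ η *
      (l j ^ η * (dist x (z j) + l j) ^ (-(n : ℝ) - ((d : ℝ) + 1) / k)) := by
    refine Finset.prod_induction _ (1 ≤ ·) (fun _ _ => one_le_mul_of_one_le_of_one_le) le_rfl
      fun j hj => ?_
    have hlj := hl j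
    have hρ := hρpos j
    have h1 := norm_sub_le_of_mem_cube (by positivity) (hxAc j (Finset.mem_compl.1 hj))
    have h2 : √(n : ℝ) * √n = n := Real.mul_self_sqrt (by positivity)
    have h3 : dist x (z j) + l j ≤ (50 * n + 1) * l j := by
      rw [dist_eq_norm]
      calc _ ≤ √n * (100 * √n * l j) / 2 + l j := by gcongr
        _ = (50 * (√n * √n) + 1) * l j := by ring
        _ = _ := by rw [h2]
    have h4 : -(n : ℝ) - ((d : ℝ) + 1) / k = -η := by rw [hη]; ring
    rw [h4, ← mul_assoc, ← Real.mul_rpow (by positivity) hlj.le, Real.rpow_neg hρ.le,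
      ← div_eq_mul_inv, one_le_div (by positivity)]
    exact Real.rpow_le_rpow hρ.le h3 hη0
  refine key.trans ?_
  have hIA0 : 0 ≤ ∏ i ∈ Aᶜ, ∫ y, φ i y :=
    Finset.prod_nonneg fun i _ => integral_nonneg (hφ0 i)
  have hIA1 : 0 ≤ ∏ i ∈ A, V * l i ^ (n : ℝ) :=
    Finset.prod_nonneg fun i _ => by have := hl i; positivity
  have hB0 : 0 ≤ ∏ j ∈ A, l j ^ η *
      (dist x (z j) + l j) ^ (-(n : ℝ) - ((d : ℝ) + 1) / k + α / k) :=
    Finset.prod_nonneg fun i _ => by have := hl i; positivity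
  set B := ∏ j ∈ A, l j ^ η *
      (dist x (z j) + l j) ^ (-(n : ℝ) - ((d : ℝ) + 1) / k + α / k) with hB
  calc _ ≤ C * l j0 ^ (d + 1) * (S ^ (-σ₁) *
        ((∏ i ∈ A, V * l i ^ (n : ℝ)) * ∏ i ∈ Aᶜ, J * S ^ (-ε))) := by gcongr
    _ = C * (∏ _j ∈ Aᶜ, J) * ((∏ _i ∈ A, l j0 ^ (((d : ℝ) + 1) / k)) *
          (∏ i ∈ A, V * l i ^ (n : ℝ)) * ∏ _i ∈ A, S ^ (-θ)) := by
        rw [← hpl, ← hpS, Finset.prod_mul_distrib (s := Aᶜ)]; ring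
    _ ≤ C * (∏ _j ∈ Aᶜ, J) * ((∏ _j ∈ A, V * 4 ^ θ) * B) := by gcongr
    _ ≤ C * (∏ _j ∈ Aᶜ, J) * ((∏ _j ∈ A, V * 4 ^ θ) * B) *
        ∏ j ∈ Aᶜ, (50 * (n : ℝ) + 1) ^ η *
          (l j ^ η * (dist x (z j) + l j) ^ (-(n : ℝ) - ((d : ℝ) + 1) / k)) :=
        le_mul_of_one_le_right (by positivity) hAc1
    _ = _ := by
        rw [Finset.prod_mul_distrib (s := Aᶜ) (f := fun _ => (50 * (n : ℝ) + 1) ^ η),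
          Finset.prod_mul_distrib (s := Aᶜ) (f := fun _ => J)]
        ring

end
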